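/- Assume γL² < 1 and set α := (1 − γL²)/(4L³). Let w ∈ W, let w* ∈ W be a fixed point of the projected expected update (w* is the metric projection of w* + α·ḡ(w*) onto W), and let p ∈ W be the metric projection of w + α·ḡ(w) onto W. Then ‖w* − p‖₂² ≤ ‖w* − w‖₂² − ((1 − γL²)/(2L²))²·Σ_s D(s)·⟨x(s), w* − w⟩². -/

import Mathlib

/-!
Weight the transitions by `μ(s, s') = D(s) P(s, s')`; stationarity says that both marginals of `μ`
are `D`. Let `z(s) = ⟨x(s), w* - w⟩` and `Q = Σ_s D(s) z(s)²`. The monotone part `f(⟨x(s), w⟩)` of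
the temporal-difference error contributes at least `z(s)²/L` to `⟨w* - w, ḡ(w) - ḡ(w*)⟩`, and the
bootstrapped part `f(r + γ⟨x(s'), w⟩)` costs at most `γL |z(s)| |z(s')| ≤ γL (z(s)² + z(s')²)/2`.
Averaging over `μ` gives `⟨w* - w, ḡ(w) - ḡ(w*)⟩ ≥ (1/L - γL) Q`; the same two contributions and
Jensen's inequality give `‖ḡ(w) - ḡ(w*)‖² ≤ ((1 + γ)L)² Q ≤ 4L² Q`. As metric projection onto a
convex set is nonexpansive, expanding `‖(w* - w) - α(ḡ(w) - ḡ(w*))‖²` yields a gain of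
`(2α(1/L - γL) - 4α²L²) Q`, which the step size `α = (1 - γL²)/(4L³)` maximises.
-/

open scoped RealInnerProductSpace BigOperators
open Finset

/-- The per-sample TD update
`g(w; s, s') := (f(r(s,s') + γ⟨x(s'), w⟩) − f(⟨x(s), w⟩)) • x(s)`. -/
noncomputable def tdSample {S : Type*} {d : ℕ} (x : S → EuclideanSpace ℝ (Fin d))
    (r : S → S → ℝ) (γ : ℝ) (f : ℝ → ℝ) (w : EuclideanSpace ℝ (Fin d)) (s s' : S) :
    EuclideanSpace ℝ (Fin d) :=
  (f (r s s' + γ * ⟪x s', w⟫) - f ⟪x s, w⟫) • x s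

/-- The expected TD update `ḡ(w) := Σ_{s,s'} D(s) P(s,s') g(w; s, s')`. -/
noncomputable def tdExpected {S : Type*} [Fintype S] {d : ℕ} (D : S → ℝ) (P : S → S → ℝ)
    (x : S → EuclideanSpace ℝ (Fin d)) (r : S → S → ℝ) (γ : ℝ) (f : ℝ → ℝ)
    (w : EuclideanSpace ℝ (Fin d)) : EuclideanSpace ℝ (Fin d) :=
  ∑ s, ∑ s', (D s * P s s') • tdSample x r γ f w s s'

open scoped NNReal

section MetricProjection

variable {E : Type*} [NormedAddCommGroup E] [InnerProductSpace ℝ E]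

/-- `p` is a metric projection of `v` onto `W`: a nearest point of `W` to `v`. It is a relation, so
that neither existence nor uniqueness of nearest points is presupposed. -/
def IsMetricProjection (W : Set E) (v p : E) : Prop :=
  p ∈ W ∧ ∀ u ∈ W, ‖v - p‖ ≤ ‖v - u‖

variable {W : Set E}

lemma IsMetricProjection.inner_sub_nonpos (hW : Convex ℝ W) {v p u : E}
    (hp : IsMetricProjection W v p) (hu : u ∈ W) : ⟪v - p, u - p⟫ ≤ 0 := by
  have hmin : IsMinOn (fun u => ‖v - u‖) W p := hp.2
  exact (norm_eq_iInf_iff_real_inner_le_zero hW hp.1).1 (hmin.iInf_eq hp.1).symm u hu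

lemma IsMetricProjection.norm_sub_le (hW : Convex ℝ W) {v v' p p' : E}
    (hp : IsMetricProjection W v p) (hp' : IsMetricProjection W v' p') :
    ‖p - p'‖ ≤ ‖v - v'‖ := by
  have hfirm : ‖p - p'‖ * ‖p - p'‖ ≤ ⟪v - v', p - p'⟫ := by
    have h := hp.inner_sub_nonpos hW hp'.1
    have h' := hp'.inner_sub_nonpos hW hp.1
    rw [← real_inner_self_eq_norm_mul_norm]
    simp only [inner_sub_left, inner_sub_right] at *
    linarith
  rcases (norm_nonneg (p - p')).eq_or_lt with hzero | hpos
  · exact hzero ▸ norm_nonneg _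
  · exact le_of_mul_le_mul_right (hfirm.trans (real_inner_le_norm _ _)) hpos

lemma norm_sub_sq_le_of_projected_steps (hW : Convex ℝ W) {v w p q g h : E} {α c C Q : ℝ}
    (hα : 0 ≤ α) (hq : IsMetricProjection W (v + α • g) q)
    (hp : IsMetricProjection W (w + α • h) p)
    (hinner : c * Q ≤ ⟪v - w, h - g⟫) (hnorm : ‖h - g‖ ^ 2 ≤ C * Q) :
    ‖q - p‖ ^ 2 ≤ ‖v - w‖ ^ 2 - (2 * α * c - α ^ 2 * C) * Q :=
  calc ‖q - p‖ ^ 2 ≤ ‖v + α • g - (w + α • h)‖ ^ 2 := by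
        gcongr; exact hq.norm_sub_le hW hp
    _ = ‖(v - w) - α • (h - g)‖ ^ 2 := by congr 2; module
    _ = ‖v - w‖ ^ 2 - 2 * α * ⟪v - w, h - g⟫ + α ^ 2 * ‖h - g‖ ^ 2 := by
        rw [norm_sub_sq_real, real_inner_smul_right, norm_smul, mul_pow, Real.norm_eq_abs, sq_abs]
        ring
    _ ≤ ‖v - w‖ ^ 2 - 2 * α * (c * Q) + α ^ 2 * (C * Q) := by gcongr
    _ = ‖v - w‖ ^ 2 - (2 * α * c - α ^ 2 * C) * Q := by ring

end MetricProjection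

section SelfCoupling

variable {S : Type*} [Fintype S]

/-- `μ` is a nonnegative weight on pairs with both marginals equal to `D`. For a stationary Markov
chain this is the joint law of two consecutive states. -/
structure IsSelfCoupling (D : S → ℝ) (μ : S → S → ℝ) : Prop where
  nonneg : ∀ s s', 0 ≤ μ s s'
  sum_right : ∀ s, ∑ s', μ s s' = D s
  sum_left : ∀ s', ∑ s, μ s s' = D s'

variable {D : S → ℝ} {μ P : S → S → ℝ}

lemma isSelfCoupling_of_stationary (hD : ∀ s, 0 ≤ D s) (hP : ∀ s s', 0 ≤ P s s')
    (hP1 : ∀ s, ∑ s', P s s' = 1) (hstat : ∀ s', ∑ s, D s * P s s' = D s') :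
    IsSelfCoupling D fun s s' => D s * P s s' where
  nonneg s s' := mul_nonneg (hD s) (hP s s')
  sum_right s := by rw [← mul_sum, hP1, mul_one]
  sum_left := hstat

namespace IsSelfCoupling

lemma marginal_nonneg (hμ : IsSelfCoupling D μ) (s : S) : 0 ≤ D s :=
  hμ.sum_right s ▸ sum_nonneg fun s' _ => hμ.nonneg s s'

lemma sum_mul_add (hμ : IsSelfCoupling D μ) (a b : ℝ) (h : S → ℝ) :
    ∑ s, ∑ s', μ s s' * (a * h s + b * h s') = (a + b) * ∑ s, D s * h s := by
  have hfst : ∑ s, ∑ s', μ s s' * h s = ∑ s, D s * h s := by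
    simp only [← sum_mul, hμ.sum_right]
  have hsnd : ∑ s, ∑ s', μ s s' * h s' = ∑ s, D s * h s := by
    rw [sum_comm]
    simp only [← sum_mul, hμ.sum_left]
  simp only [mul_add, mul_left_comm, sum_add_distrib, ← mul_sum, hfst, hsnd]
  ring

end IsSelfCoupling

end SelfCoupling

section TDError

/-- The temporal-difference error, seen through `f`, of a transition with reward `c` from a state
of predicted value `a` to a state of predicted value `a'`. -/
def tdError (f : ℝ → ℝ) (γ c a a' : ℝ) : ℝ :=
  f (c + γ * a') - f a

variable {f : ℝ → ℝ} {γ m : ℝ} {K : ℝ≥0}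

lemma mul_sq_sub_le_of_monotone (hf : Monotone f) (hlower : ∀ a b, m * |a - b| ≤ |f a - f b|)
    (a b : ℝ) : m * (a - b) ^ 2 ≤ (a - b) * (f a - f b) :=
  calc m * (a - b) ^ 2 = |a - b| * (m * |a - b|) := by rw [← sq_abs]; ring
    _ ≤ |a - b| * |f a - f b| := by gcongr; exact hlower a b
    _ = (a - b) * (f a - f b) := by
        have hnonneg : 0 ≤ (a - b) * (f a - f b) :=
          (monotone_id.monovary hf).sub_mul_sub_nonneg b a
        rw [← abs_mul, abs_of_nonneg hnonneg]

lemma abs_sub_affine_le (hf : LipschitzWith K f) (hγ : 0 ≤ γ) (c a b : ℝ) :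
    |f (c + γ * a) - f (c + γ * b)| ≤ γ * K * |a - b| :=
  calc |f (c + γ * a) - f (c + γ * b)| ≤ K * |c + γ * a - (c + γ * b)| := hf.dist_le_mul _ _
    _ = γ * K * |a - b| := by
        rw [add_sub_add_left_eq_sub, ← mul_sub, abs_mul, abs_of_nonneg hγ]; ring

lemma abs_tdError_sub_le (hf : LipschitzWith K f) (hγ : 0 ≤ γ) (c a a' b b' : ℝ) :
    |tdError f γ c b b' - tdError f γ c a a'| ≤ K * |a - b| + γ * K * |a' - b'| :=
  calc |tdError f γ c b b' - tdError f γ c a a'|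
      = |(f a - f b) - (f (c + γ * a') - f (c + γ * b'))| := by unfold tdError; congr 1; ring
    _ ≤ |f a - f b| + |f (c + γ * a') - f (c + γ * b')| := abs_sub _ _
    _ ≤ K * |a - b| + γ * K * |a' - b'| :=
        add_le_add (hf.dist_le_mul a b) (abs_sub_affine_le hf hγ c a' b')

lemma le_mul_tdError_sub (hmono : ∀ a b, m * (a - b) ^ 2 ≤ (a - b) * (f a - f b))
    (hf : LipschitzWith K f) (hγ : 0 ≤ γ) (c a a' b b' : ℝ) :
    (m - γ * K / 2) * (a - b) ^ 2 + -(γ * K / 2) * (a' - b') ^ 2 ≤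
      (a - b) * (tdError f γ c b b' - tdError f γ c a a') := by
  have hcross : (a - b) * (f (c + γ * a') - f (c + γ * b')) ≤
      γ * K / 2 * ((a - b) ^ 2 + (a' - b') ^ 2) :=
    calc (a - b) * (f (c + γ * a') - f (c + γ * b'))
        ≤ |a - b| * |f (c + γ * a') - f (c + γ * b')| := (le_abs_self _).trans_eq (abs_mul _ _)
      _ ≤ |a - b| * (γ * K * |a' - b'|) := by gcongr; exact abs_sub_affine_le hf hγ c a' b'
      _ = γ * K / 2 * (2 * |a - b| * |a' - b'|) := by ring
      _ ≤ γ * K / 2 * (|a - b| ^ 2 + |a' - b'| ^ 2) := by gcongr; exact two_mul_le_add_sq _ _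
      _ = γ * K / 2 * ((a - b) ^ 2 + (a' - b') ^ 2) := by simp only [sq_abs]
  unfold tdError
  linarith [hmono a b]

end TDError

section MeanTDUpdate

variable {S : Type*} [Fintype S] {E : Type*} [NormedAddCommGroup E] [InnerProductSpace ℝ E]

/-- The TD update averaged over transitions `(s, s')` of weight `μ s s'`, with features in an
arbitrary real inner product space. It is `tdExpected D P` for `μ s s' = D s * P s s'`. -/
noncomputable def meanTDUpdate (μ : S → S → ℝ) (x : S → E) (r : S → S → ℝ) (γ : ℝ) (f : ℝ → ℝ)
    (w : E) : E :=
  ∑ s, ∑ s', μ s s' • tdError f γ (r s s') ⟪x s, w⟫ ⟪x s', w⟫ • x s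

variable {D : S → ℝ} {μ : S → S → ℝ} {x : S → E} {r : S → S → ℝ} {γ m : ℝ} {K : ℝ≥0} {f : ℝ → ℝ}

lemma meanTDUpdate_sub (v w : E) :
    meanTDUpdate μ x r γ f w - meanTDUpdate μ x r γ f v =
      ∑ s, ∑ s', μ s s' • (tdError f γ (r s s') ⟪x s, w⟫ ⟪x s', w⟫ -
        tdError f γ (r s s') ⟪x s, v⟫ ⟪x s', v⟫) • x s := by
  simp only [meanTDUpdate, ← sum_sub_distrib, ← smul_sub, ← sub_smul]

lemma le_inner_meanTDUpdate_sub (hμ : IsSelfCoupling D μ) (hγ : 0 ≤ γ)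
    (hmono : ∀ a b, m * (a - b) ^ 2 ≤ (a - b) * (f a - f b)) (hf : LipschitzWith K f) (v w : E) :
    (m - γ * K) * ∑ s, D s * ⟪x s, v - w⟫ ^ 2 ≤
      ⟪v - w, meanTDUpdate μ x r γ f w - meanTDUpdate μ x r γ f v⟫ := by
  have haverage := hμ.sum_mul_add (m - γ * K / 2) (-(γ * K / 2)) fun s => ⟪x s, v - w⟫ ^ 2
  calc (m - γ * K) * ∑ s, D s * ⟪x s, v - w⟫ ^ 2
      = ∑ s, ∑ s', μ s s' * ((m - γ * K / 2) * ⟪x s, v - w⟫ ^ 2 +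
          -(γ * K / 2) * ⟪x s', v - w⟫ ^ 2) := by rw [haverage]; ring
    _ ≤ ∑ s, ∑ s', μ s s' * (⟪x s, v - w⟫ * (tdError f γ (r s s') ⟪x s, w⟫ ⟪x s', w⟫ -
          tdError f γ (r s s') ⟪x s, v⟫ ⟪x s', v⟫)) := by
        gcongr with s _ s' _
        · exact hμ.nonneg s s'
        · simpa only [inner_sub_right] using
            le_mul_tdError_sub hmono hf hγ (r s s') ⟪x s, v⟫ ⟪x s', v⟫ ⟪x s, w⟫ ⟪x s', w⟫
    _ = ⟪v - w, meanTDUpdate μ x r γ f w - meanTDUpdate μ x r γ f v⟫ := by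
        simp only [meanTDUpdate_sub, inner_sum, real_inner_smul_right, real_inner_comm (v - w),
          mul_comm]

lemma norm_meanTDUpdate_sub_le (hμ : IsSelfCoupling D μ) (hx : ∀ s, ‖x s‖ ≤ 1) (hγ : 0 ≤ γ)
    (hf : LipschitzWith K f) (v w : E) :
    ‖meanTDUpdate μ x r γ f w - meanTDUpdate μ x r γ f v‖ ≤
      (1 + γ) * K * ∑ s, D s * |⟪x s, v - w⟫| := by
  have haverage := hμ.sum_mul_add K (γ * K) fun s => |⟪x s, v - w⟫|
  calc ‖meanTDUpdate μ x r γ f w - meanTDUpdate μ x r γ f v‖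
      ≤ ∑ s, ∑ s', μ s s' * (K * |⟪x s, v - w⟫| + γ * K * |⟪x s', v - w⟫|) := by
        rw [meanTDUpdate_sub]
        refine norm_sum_le_of_le _ fun s _ => norm_sum_le_of_le _ fun s' _ => ?_
        rw [norm_smul, norm_smul, Real.norm_of_nonneg (hμ.nonneg s s'), Real.norm_eq_abs]
        gcongr
        · exact hμ.nonneg s s'
        · refine (mul_le_of_le_one_right (abs_nonneg _) (hx s)).trans ?_
          simpa only [inner_sub_right] using abs_tdError_sub_le hf hγ _ _ _ _ _
    _ = (1 + γ) * K * ∑ s, D s * |⟪x s, v - w⟫| := by rw [haverage]; ring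

lemma norm_meanTDUpdate_sub_sq_le (hμ : IsSelfCoupling D μ) (hD1 : ∑ s, D s = 1)
    (hx : ∀ s, ‖x s‖ ≤ 1) (hγ : 0 ≤ γ) (hf : LipschitzWith K f) (v w : E) :
    ‖meanTDUpdate μ x r γ f w - meanTDUpdate μ x r γ f v‖ ^ 2 ≤
      ((1 + γ) * K) ^ 2 * ∑ s, D s * ⟪x s, v - w⟫ ^ 2 := by
  have hjensen : (∑ s, D s * |⟪x s, v - w⟫|) ^ 2 ≤ ∑ s, D s * ⟪x s, v - w⟫ ^ 2 := by
    simpa only [sq_abs] using Real.pow_arith_mean_le_arith_mean_pow_of_even univ D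
      (fun s => |⟪x s, v - w⟫|) (fun s _ => hμ.marginal_nonneg s) hD1 even_two
  calc ‖meanTDUpdate μ x r γ f w - meanTDUpdate μ x r γ f v‖ ^ 2
      ≤ ((1 + γ) * K * ∑ s, D s * |⟪x s, v - w⟫|) ^ 2 := by
        gcongr; exact norm_meanTDUpdate_sub_le hμ hx hγ hf v w
    _ = ((1 + γ) * K) ^ 2 * (∑ s, D s * |⟪x s, v - w⟫|) ^ 2 := mul_pow _ _ _
    _ ≤ ((1 + γ) * K) ^ 2 * ∑ s, D s * ⟪x s, v - w⟫ ^ 2 := by gcongr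

theorem norm_sub_sq_le_of_projected_meanTDUpdate {W : Set E} (hW : Convex ℝ W)
    (hμ : IsSelfCoupling D μ) (hD1 : ∑ s, D s = 1) (hx : ∀ s, ‖x s‖ ≤ 1) (hγ : 0 ≤ γ)
    (hmono : ∀ a b, m * (a - b) ^ 2 ≤ (a - b) * (f a - f b)) (hf : LipschitzWith K f)
    {α : ℝ} (hα : 0 ≤ α) {v w p q : E}
    (hq : IsMetricProjection W (v + α • meanTDUpdate μ x r γ f v) q)
    (hp : IsMetricProjection W (w + α • meanTDUpdate μ x r γ f w) p) :
    ‖q - p‖ ^ 2 ≤ ‖v - w‖ ^ 2 -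
      (2 * α * (m - γ * K) - α ^ 2 * ((1 + γ) * K) ^ 2) * ∑ s, D s * ⟪x s, v - w⟫ ^ 2 :=
  norm_sub_sq_le_of_projected_steps hW hα hq hp (le_inner_meanTDUpdate_sub hμ hγ hmono hf v w)
    (norm_meanTDUpdate_sub_sq_le hμ hD1 hx hγ hf v w)

end MeanTDUpdate

lemma progress_coeff_le {γ L : ℝ} (hγ0 : 0 ≤ γ) (hγ1 : γ ≤ 1) (hL : 0 < L) :
    ((1 - γ * L ^ 2) / (2 * L ^ 2)) ^ 2 ≤
      2 * ((1 - γ * L ^ 2) / (4 * L ^ 3)) * (1 / L - γ * L) -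
        ((1 - γ * L ^ 2) / (4 * L ^ 3)) ^ 2 * ((1 + γ) * L) ^ 2 := by
  set α := (1 - γ * L ^ 2) / (4 * L ^ 3) with hα
  calc ((1 - γ * L ^ 2) / (2 * L ^ 2)) ^ 2
      = 2 * α * (1 / L - γ * L) - α ^ 2 * (2 * L) ^ 2 := by rw [hα]; field_simp; ring
    _ ≤ 2 * α * (1 / L - γ * L) - α ^ 2 * ((1 + γ) * L) ^ 2 := by gcongr; linarith

theorem td_projected_update_progress_general {S : Type*} [Fintype S] {E : Type*}
    [NormedAddCommGroup E] [InnerProductSpace ℝ E] {D : S → ℝ} {μ : S → S → ℝ} {x : S → E}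
    {r : S → S → ℝ} {γ L : ℝ} {f : ℝ → ℝ} {W : Set E} {w wstar p : E}
    (hμ : IsSelfCoupling D μ) (hD1 : ∑ s, D s = 1) (hx : ∀ s, ‖x s‖ ≤ 1)
    (hγ0 : 0 ≤ γ) (hL : 1 ≤ L) (hγL : γ * L ^ 2 < 1) (hf : Monotone f)
    (hfLip : ∀ a b : ℝ, (1 / L) * |a - b| ≤ |f a - f b| ∧ |f a - f b| ≤ L * |a - b|)
    (hW : Convex ℝ W)
    (hfix : IsMetricProjection W
      (wstar + ((1 - γ * L ^ 2) / (4 * L ^ 3)) • meanTDUpdate μ x r γ f wstar) wstar)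
    (hproj : IsMetricProjection W
      (w + ((1 - γ * L ^ 2) / (4 * L ^ 3)) • meanTDUpdate μ x r γ f w) p) :
    ‖wstar - p‖ ^ 2 ≤ ‖wstar - w‖ ^ 2 -
      ((1 - γ * L ^ 2) / (2 * L ^ 2)) ^ 2 * ∑ s, D s * ⟪x s, wstar - w⟫ ^ 2 := by
  have hL0 : 0 < L := zero_lt_one.trans_le hL
  have hγ1 : γ ≤ 1 := (le_mul_of_one_le_right hγ0 (one_le_pow₀ hL)).trans hγL.le
  have hα : 0 ≤ (1 - γ * L ^ 2) / (4 * L ^ 3) := div_nonneg (sub_nonneg.2 hγL.le) (by positivity)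
  have hQ : 0 ≤ ∑ s, D s * ⟪x s, wstar - w⟫ ^ 2 :=
    sum_nonneg fun s _ => mul_nonneg (hμ.marginal_nonneg s) (sq_nonneg _)
  lift L to ℝ≥0 using hL0.le
  have hmono := mul_sq_sub_le_of_monotone hf fun a b => (hfLip a b).1
  have hLip : LipschitzWith L f := .of_dist_le_mul fun a b => (hfLip a b).2
  refine (norm_sub_sq_le_of_projected_meanTDUpdate hW hμ hD1 hx hγ0 hmono hLip hα hfix
    hproj).trans ?_
  gcongr
  exact progress_coeff_le hγ0 hγ1 hL0

/-- one-step progress bound of the projected expected TD update toward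
its fixed point `w*`:
`‖w* − p‖² ≤ ‖w* − w‖² − ((1 − γL²)/(2L²))² Σ_s D(s)⟨x(s), w* − w⟩²`. -/
theorem td_projected_update_progress {S : Type*} [Fintype S] [Nonempty S] {d : ℕ}
    (D : S → ℝ) (P : S → S → ℝ) (x : S → EuclideanSpace ℝ (Fin d))
    (r : S → S → ℝ) (γ L : ℝ) (f : ℝ → ℝ)
    (hD : ∀ s, 0 ≤ D s) (hD1 : ∑ s, D s = 1)
    (hP : ∀ s s', 0 ≤ P s s') (hP1 : ∀ s, ∑ s', P s s' = 1)
    (hstat : ∀ s', ∑ s, D s * P s s' = D s')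
    (hx : ∀ s, ‖x s‖ ≤ 1)
    (hγ0 : 0 ≤ γ) (hγ1 : γ < 1) (hL : 1 ≤ L)
    (hf : StrictMono f)
    (hfLip : ∀ a b : ℝ, (1 / L) * |a - b| ≤ |f a - f b| ∧ |f a - f b| ≤ L * |a - b|)
    (W : Set (EuclideanSpace ℝ (Fin d)))
    (hWne : W.Nonempty) (hWcpt : IsCompact W) (hWcvx : Convex ℝ W)
    (hγL : γ * L ^ 2 < 1)
    (w wstar p : EuclideanSpace ℝ (Fin d))
    (hw : w ∈ W) (hwstar : wstar ∈ W) (hp : p ∈ W)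
    (hfix : ∀ u ∈ W,
      ‖wstar + ((1 - γ * L ^ 2) / (4 * L ^ 3)) • tdExpected D P x r γ f wstar - wstar‖ ≤
        ‖wstar + ((1 - γ * L ^ 2) / (4 * L ^ 3)) • tdExpected D P x r γ f wstar - u‖)
    (hproj : ∀ u ∈ W,
      ‖w + ((1 - γ * L ^ 2) / (4 * L ^ 3)) • tdExpected D P x r γ f w - p‖ ≤
        ‖w + ((1 - γ * L ^ 2) / (4 * L ^ 3)) • tdExpected D P x r γ f w - u‖) :
    ‖wstar - p‖ ^ 2 ≤ ‖wstar - w‖ ^ 2 -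
      ((1 - γ * L ^ 2) / (2 * L ^ 2)) ^ 2 * ∑ s, D s * ⟪x s, wstar - w⟫ ^ 2 :=
  td_projected_update_progress_general (isSelfCoupling_of_stationary hD hP hP1 hstat) hD1 hx hγ0 hL
    hγL hf.monotone hfLip hWcvx ⟨hwstar, hfix⟩ ⟨hp, hproj⟩
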